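/- Let d ≥ 1 be an integer, δ ∈ (0,1), K₀ ≥ 0 and K > 0. Let H(u', u'', t, x), with u' ∈ ℝ^{d+1}, u'' a symmetric d×d matrix, (t,x) ∈ ℝ × ℝ^d, be real-valued, Lipschitz continuous in u'', and such that at every point of differentiability of H with respect to u'' the derivative, represented as a symmetric matrix a via w ↦ tr(a w), belongs to 𝕊_δ; suppose also |H(u',0,t,x)| ≤ K₀|u'| + H̄ for all u',t,x with a finite constant H̄ ≥ 0. Define H_K(u,t,x) = max( H(u,t,x), P₀(u'') − K ) and H̄_K := sup over (u',t,x) of ( |H_K(u',0,t,x)| − K₀|u'| ) (which is finite). Then there is a constant N depending only on d and δ such that at every point u'' where H_K(u',·,t,x) is differentiable, with derivative represented by a symmetric matrix a via w ↦ tr(a w), one has |H_K(u,t,x) − tr(a u'')| ≤ N(K₀+1)(H̄_K + K + |u'|). -/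

import Mathlib

open scoped BigOperators NNReal

attribute [local instance] Matrix.frobeniusNormedAddCommGroup Matrix.frobeniusNormedSpace

noncomputable section

/-- `𝕊_θ`: symmetric `d×d` matrices with `θ|ξ|² ≤ ⟨aξ,ξ⟩ ≤ θ⁻¹|ξ|²`. -/
def Sdelta (d : ℕ) (θ : ℝ) : Set (Matrix (Fin d) (Fin d) ℝ) :=
  {a | a.IsHermitian ∧ ∀ ξ : Fin d → ℝ,
    θ * (∑ i, ξ i ^ 2) ≤ (∑ i, ∑ j, a i j * ξ j * ξ i) ∧
      (∑ i, ∑ j, a i j * ξ j * ξ i) ≤ θ⁻¹ * (∑ i, ξ i ^ 2)}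

/-- Frobenius norm of a matrix. -/
def frobNorm (d : ℕ) (M : Matrix (Fin d) (Fin d) ℝ) : ℝ :=
  Real.sqrt (∑ i, ∑ j, (M i j) ^ 2)

/-- Euclidean norm of a vector. -/
def eunorm {n : ℕ} (u : Fin n → ℝ) : ℝ :=
  Real.sqrt (∑ i, u i ^ 2)

/-- Pucci's operator `P₀(M) = 2δ⁻¹ Σ λ_k⁺(M) − (δ/2) Σ λ_k⁻(M)` (for Hermitian `M`;
junk value `0` otherwise). -/
def pucci (d : ℕ) (δ : ℝ) (M : Matrix (Fin d) (Fin d) ℝ) : ℝ :=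
  if h : M.IsHermitian then
    2 * δ⁻¹ * (∑ k, max (h.eigenvalues k) 0) - (δ / 2) * (∑ k, max (-(h.eigenvalues k)) 0)
  else 0

/-!
`P₀` is the maximum of the linear functions `M ↦ tr (a M)` over `a ∈ 𝕊_{δ/2}`; in particular it is
convex, hence continuous, and positively homogeneous. At a point `M` where `H_K = P₀ - K`, the
derivative of `H_K` along the ray through `M` is therefore `P₀(M)`, and the difference to be
estimated is `-K`.

Where instead `H > P₀ - K`, the function `H_K` coincides with `H` near `M`, so its derivative is
given by some `a ∈ 𝕊_δ`. Integrating the derivative of `H` from `0` to `M` yields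
`H(M) ≤ H(0) + δ⁻¹ tr M⁺ - δ tr M⁻`. The coefficients `2δ⁻¹`, `δ/2` of `P₀` beat `δ⁻¹`, `δ`, so that
`P₀(M) - K < H(M)` forces `δ⁻¹ tr M⁺ + (δ/2) tr M⁻ ≤ H(0) + K`: the eigenvalues of `M` are bounded,
and with them `H(M) - tr (a M)`.
-/

section LipschitzFunctions

open MeasureTheory

lemma absolutelyContinuousOnInterval_sub_le_of_ae_deriv_le {g : ℝ → ℝ} {a b c : ℝ}
    (hg : AbsolutelyContinuousOnInterval g a b) (hab : a ≤ b) (hc : ∀ᵐ s, deriv g s ≤ c) :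
    g b - g a ≤ c * (b - a) :=
  calc g b - g a = ∫ s in a..b, deriv g s := hg.integral_deriv_eq_sub.symm
    _ ≤ ∫ _ in a..b, c := intervalIntegral.integral_mono_ae hab
        hg.intervalIntegrable_deriv intervalIntegrable_const hc
    _ = c * (b - a) := by simp [mul_comm]

variable {E : Type*} [NormedAddCommGroup E] [NormedSpace ℝ E] [FiniteDimensional ℝ E]

/-- By Rademacher and Fubini, `f` is differentiable almost everywhere on almost every line parallel
to `w`; the remaining lines are reached by density. -/
lemma lipschitzWith_add_sub_le_of_fderiv_le {f : E → ℝ} {C : ℝ≥0} (hf : LipschitzWith C f)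
    {w : E} {c : ℝ} (hc : ∀ (y : E) (f' : E →L[ℝ] ℝ), HasFDerivAt f f' y → f' w ≤ c) (x : E) :
    f (x + w) - f x ≤ c := by
  borelize E
  let μ : Measure E := Measure.addHaar
  have ae_line : ∀ᵐ y ∂μ, ∀ᵐ s : ℝ, DifferentiableAt ℝ f (y + s • w) :=
    (ae_ae_add_linearMap_mem_iff (LinearMap.toSpanSingleton ℝ E w) volume μ
      (measurableSet_of_differentiableAt ℝ f)).2 hf.ae_differentiableAt
  have ae_le : ∀ᵐ y ∂μ, f (y + w) - f y ≤ c := by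
    filter_upwards [ae_line] with y hy
    have line_lipschitz : LipschitzWith ‖w‖₊ fun s : ℝ => y + s • w := by
      simpa using (LipschitzWith.const (α := ℝ) y).add
        (ContinuousLinearMap.toSpanSingleton ℝ w).lipschitz
    have deriv_le : ∀ᵐ s : ℝ, deriv (fun s : ℝ => f (y + s • w)) s ≤ c := by
      filter_upwards [hy] with s hs
      have line_deriv : HasDerivAt (fun s : ℝ => y + s • w) w s := by
        simpa using ((hasDerivAt_id s).smul_const w).const_add y
      exact (hs.hasFDerivAt.comp_hasDerivAt s line_deriv).deriv.trans_le (hc _ _ hs.hasFDerivAt)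
    simpa using absolutelyContinuousOnInterval_sub_le_of_ae_deriv_le
      (hf.comp line_lipschitz).lipschitzOnWith.absolutelyContinuousOnInterval zero_le_one deriv_le
  have isClosed_le : IsClosed {y | f (y + w) - f y ≤ c} := by
    have := hf.continuous
    exact isClosed_le (by fun_prop) continuous_const
  exact isClosed_le.closure_subset (Measure.dense_of_ae ae_le x)

lemma lipschitzOnWith_submodule_add_sub_le {V : Submodule ℝ E} {f : E → ℝ} {C : ℝ≥0}
    (hf : LipschitzOnWith C f V) {w : E} (hw : w ∈ V) {c : ℝ}
    (hc : ∀ y ∈ V, ∀ f' : E →L[ℝ] ℝ, HasFDerivWithinAt f f' V y → f' w ≤ c)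
    {x : E} (hx : x ∈ V) : f (x + w) - f x ≤ c := by
  obtain ⟨p, hp⟩ := V.subtype.exists_leftInverse_of_injective V.ker_subtype
  have p_coe (y : V) : p y = y := LinearMap.congr_fun hp y
  refine lipschitzWith_add_sub_le_of_fderiv_le (f := fun y : V => f y) (w := ⟨w, hw⟩)
    (lipschitzOnWith_iff_restrict.1 hf) (fun y f' hf' => ?_) ⟨x, hx⟩
  have hasFDeriv_comp : HasFDerivAt (fun z => f (p z)) (f'.comp p.toContinuousLinearMap) (y : E) :=
    HasFDerivAt.comp (g := fun y : V => f y) _ (by simpa [p_coe] using hf')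
      p.toContinuousLinearMap.hasFDerivAt
  have f_eq_comp : Set.EqOn f (fun z => f (p z)) V := fun z hz => by simp [p_coe ⟨z, hz⟩]
  simpa [p_coe ⟨w, hw⟩] using
    hc y y.2 _ (hasFDeriv_comp.hasFDerivWithinAt.congr f_eq_comp (f_eq_comp y.2))

lemma convexOn_submodule_continuousOn {V : Submodule ℝ E} {f : E → ℝ} (hf : ConvexOn ℝ V f) :
    ContinuousOn f V := by
  have : ConvexOn ℝ Set.univ (fun y : V => f y) := by
    simpa [Function.comp_def, Set.preimage] using hf.comp_linearMap V.subtype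
  exact continuousOn_iff_continuous_domRestrict.2 this.locallyLipschitz.continuous

end LipschitzFunctions

section Derivatives

variable {E : Type*} [NormedAddCommGroup E] [NormedSpace ℝ E] {f : E → ℝ} {f' : E →L[ℝ] ℝ} {x : E}

lemma hasDerivAt_comp_smul_of_mem_submodule {V : Submodule ℝ E}
    (hf : HasFDerivWithinAt f f' V x) (hx : x ∈ V) :
    HasDerivAt (fun s : ℝ => f (s • x)) (f' x) 1 := by
  have hray : HasDerivAt (fun s : ℝ => s • x) x 1 := by
    simpa using (hasDerivAt_id (1 : ℝ)).smul_const x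
  rw [← one_smul ℝ x] at hf
  simpa [Function.comp_def] using
    hf.comp_hasDerivAt 1 hray (.of_forall fun s => V.smul_mem s hx)

lemma eq_of_hasDerivAt_max_of_le {f g : ℝ → ℝ} {f' g' s : ℝ}
    (hmax : HasDerivAt (fun r => max (f r) (g r)) f' s) (hg : HasDerivAt g g' s)
    (hle : f s ≤ g s) : f' = g' := by
  have hmin : IsLocalMin (fun r => max (f r) (g r) - g r) s :=
    .of_forall fun r => by simp [hle]
  exact sub_eq_zero.1 (hmin.hasDerivAt_eq_zero (hmax.sub hg))

lemma hasFDerivWithinAt_of_max_of_lt {g : E → ℝ} {s : Set E}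
    (hmax : HasFDerivWithinAt (fun y => max (f y) (g y)) f' s x) (hf : ContinuousWithinAt f s x)
    (hg : ContinuousWithinAt g s x) (hlt : g x < f x) : HasFDerivWithinAt f f' s x :=
  hmax.congr_of_eventuallyEq
    ((hg.eventually_lt hf hlt).mono fun _ hy => (max_eq_left hy.le).symm) (max_eq_left hlt.le).symm

end Derivatives

section Eigenvalues

open Matrix

variable {n : Type*} [Fintype n] [DecidableEq n] {M : Matrix n n ℝ}

/-- `tr M⁺`: the sum of the positive eigenvalues of `M`, counted with multiplicity. It carries the
positive part of Pucci's operator. -/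
def posEigenvalueSum (hM : M.IsHermitian) : ℝ := ∑ k, max (hM.eigenvalues k) 0

/-- `tr M⁻`: the sum of the absolute values of the negative eigenvalues of `M`, counted with
multiplicity. It carries the negative part of Pucci's operator. -/
def negEigenvalueSum (hM : M.IsHermitian) : ℝ := ∑ k, max (-hM.eigenvalues k) 0

lemma posEigenvalueSum_nonneg (hM : M.IsHermitian) : 0 ≤ posEigenvalueSum hM :=
  Finset.sum_nonneg fun _ _ => le_max_right _ _

lemma negEigenvalueSum_nonneg (hM : M.IsHermitian) : 0 ≤ negEigenvalueSum hM :=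
  Finset.sum_nonneg fun _ _ => le_max_right _ _

lemma trace_mul_eq_sum_eigenvalues_mul (hM : M.IsHermitian) (a : Matrix n n ℝ) :
    trace (a * M) = ∑ k, hM.eigenvalues k *
      (star (hM.eigenvectorUnitary : Matrix n n ℝ) * a * hM.eigenvectorUnitary) k k := by
  conv_lhs => rw [hM.spectral_theorem, Unitary.conjStarAlgAut_apply, ← mul_assoc, trace_mul_comm,
    ← mul_assoc, ← mul_assoc]
  simp [trace, mul_diagonal, mul_comm]

end Eigenvalues

section Sdelta

open Matrix

variable {d : ℕ} {θ : ℝ} {a M : Matrix (Fin d) (Fin d) ℝ}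

lemma mem_Sdelta_iff : a ∈ Sdelta d θ ↔ a.IsHermitian ∧ ∀ ξ : Fin d → ℝ,
    ξ ⬝ᵥ a *ᵥ ξ ∈ Set.Icc (θ * (ξ ⬝ᵥ ξ)) (θ⁻¹ * (ξ ⬝ᵥ ξ)) := by
  have quad (ξ : Fin d → ℝ) : ∑ i, ∑ j, a i j * ξ j * ξ i = ξ ⬝ᵥ a *ᵥ ξ := by
    simp only [dotProduct, mulVec, Finset.mul_sum, mul_comm]
  have norm_sq (ξ : Fin d → ℝ) : ∑ i, ξ i ^ 2 = ξ ⬝ᵥ ξ := by simp only [dotProduct, sq]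
  simp only [Sdelta, Set.mem_ofPred_eq, quad, norm_sq, Set.mem_Icc]

lemma diag_mem_Icc_of_mem_Sdelta (ha : a ∈ Sdelta d θ) (k : Fin d) : a k k ∈ Set.Icc θ θ⁻¹ := by
  simpa using (mem_Sdelta_iff.1 ha).2 (Pi.single k 1)

lemma diagonal_mem_Sdelta {μ : Fin d → ℝ} (hμ : ∀ k, μ k ∈ Set.Icc θ θ⁻¹) :
    diagonal μ ∈ Sdelta d θ := by
  refine mem_Sdelta_iff.2 ⟨isHermitian_diagonal μ, fun ξ => ?_⟩
  have quad : ξ ⬝ᵥ diagonal μ *ᵥ ξ = ∑ k, μ k * (ξ k * ξ k) := by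
    simp only [dotProduct, mulVec_diagonal, mul_left_comm]
  rw [quad, dotProduct, Finset.mul_sum, Finset.mul_sum]
  exact ⟨Finset.sum_le_sum fun k _ => mul_le_mul_of_nonneg_right (hμ k).1 (mul_self_nonneg _),
    Finset.sum_le_sum fun k _ => mul_le_mul_of_nonneg_right (hμ k).2 (mul_self_nonneg _)⟩

lemma star_mul_mul_mem_Sdelta (ha : a ∈ Sdelta d θ) {U : Matrix (Fin d) (Fin d) ℝ}
    (hU : U ∈ unitaryGroup (Fin d) ℝ) : star U * a * U ∈ Sdelta d θ := by
  obtain ⟨ha_herm, ha_quad⟩ := mem_Sdelta_iff.1 ha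
  refine mem_Sdelta_iff.2 ⟨isHermitian_conjTranspose_mul_mul U ha_herm, fun ξ => ?_⟩
  have quad (b : Matrix (Fin d) (Fin d) ℝ) :
      ξ ⬝ᵥ (star U * b * U) *ᵥ ξ = (U *ᵥ ξ) ⬝ᵥ b *ᵥ (U *ᵥ ξ) := by
    rw [mul_assoc, ← mulVec_mulVec, ← mulVec_mulVec, dotProduct_mulVec, star_eq_conjTranspose,
      conjTranspose_eq_transpose_of_trivial, vecMul_transpose]
  have norm_sq_eq : ξ ⬝ᵥ ξ = (U *ᵥ ξ) ⬝ᵥ (U *ᵥ ξ) := by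
    simpa [mem_unitaryGroup_iff'.1 hU] using quad 1
  rw [quad, norm_sq_eq]
  exact ha_quad _

lemma mul_mem_Icc_of_mem_Icc {x b l u : ℝ} (hb : b ∈ Set.Icc l u) :
    x * b ∈ Set.Icc (l * max x 0 - u * max (-x) 0) (u * max x 0 - l * max (-x) 0) := by
  obtain ⟨hl, hu⟩ := hb
  rcases le_total 0 x with hx | hx
  · rw [max_eq_left hx, max_eq_right (neg_nonpos.2 hx)]
    constructor <;> nlinarith
  · rw [max_eq_right hx, max_eq_left (neg_nonneg.2 hx)]
    constructor <;> nlinarith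

lemma trace_mul_mem_Icc (ha : a ∈ Sdelta d θ) (hM : M.IsHermitian) :
    trace (a * M) ∈ Set.Icc (θ * posEigenvalueSum hM - θ⁻¹ * negEigenvalueSum hM)
      (θ⁻¹ * posEigenvalueSum hM - θ * negEigenvalueSum hM) := by
  have hterm (k : Fin d) := mul_mem_Icc_of_mem_Icc (x := hM.eigenvalues k)
    (diag_mem_Icc_of_mem_Sdelta (star_mul_mul_mem_Sdelta ha hM.eigenvectorUnitary.2) k)
  rw [trace_mul_eq_sum_eigenvalues_mul hM, posEigenvalueSum, negEigenvalueSum]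
  simp only [Finset.mul_sum, ← Finset.sum_sub_distrib]
  exact ⟨Finset.sum_le_sum fun k _ => (hterm k).1, Finset.sum_le_sum fun k _ => (hterm k).2⟩

/-- The maximum is attained at the matrix commuting with `M` whose eigenvalue is `θ⁻¹` where that of
`M` is nonnegative and `θ` elsewhere. -/
lemma isGreatest_trace_mul_Sdelta (hθ₀ : 0 < θ) (hθ₁ : θ ≤ 1) (hM : M.IsHermitian) :
    IsGreatest ((fun a => trace (a * M)) '' Sdelta d θ)
      (θ⁻¹ * posEigenvalueSum hM - θ * negEigenvalueSum hM) := by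
  refine ⟨?_, Set.forall_mem_image.2 fun a ha => (trace_mul_mem_Icc ha hM).2⟩
  let U : Matrix (Fin d) (Fin d) ℝ := hM.eigenvectorUnitary
  have hU : U ∈ unitaryGroup (Fin d) ℝ := hM.eigenvectorUnitary.2
  let μ : Fin d → ℝ := fun k => if 0 ≤ hM.eigenvalues k then θ⁻¹ else θ
  have hθ : θ ≤ θ⁻¹ := hθ₁.trans ((one_le_inv₀ hθ₀).2 hθ₁)
  have hμ (k : Fin d) : μ k ∈ Set.Icc θ θ⁻¹ := by
    by_cases hk : 0 ≤ hM.eigenvalues k <;> simp [μ, hk, hθ]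
  have hdiag : star U * (U * diagonal μ * star U) * U = diagonal μ := by
    simp only [mul_assoc, mem_unitaryGroup_iff'.1 hU, mul_one]
    rw [← mul_assoc, mem_unitaryGroup_iff'.1 hU, one_mul]
  have hterm (k : Fin d) : hM.eigenvalues k * μ k =
      θ⁻¹ * max (hM.eigenvalues k) 0 - θ * max (-hM.eigenvalues k) 0 := by
    rcases le_or_gt 0 (hM.eigenvalues k) with hk | hk
    · simp [μ, hk, mul_comm]
    · simp [μ, hk.not_ge, hk.le, mul_comm]
  refine ⟨U * diagonal μ * star U, ?_, ?_⟩
  · simpa using star_mul_mul_mem_Sdelta (diagonal_mem_Sdelta hμ) (Unitary.star_mem hU)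
  · simp only [trace_mul_eq_sum_eigenvalues_mul hM]
    rw [hdiag]
    simp only [diagonal_apply_eq, hterm, posEigenvalueSum, negEigenvalueSum, Finset.mul_sum,
      Finset.sum_sub_distrib]

end Sdelta

section Pucci

open Matrix

variable {d : ℕ} {δ : ℝ} {M : Matrix (Fin d) (Fin d) ℝ}

lemma pucci_eq (hM : M.IsHermitian) :
    pucci d δ M = 2 * δ⁻¹ * posEigenvalueSum hM - δ / 2 * negEigenvalueSum hM :=
  dif_pos hM

lemma isGreatest_pucci (hδ₀ : 0 < δ) (hδ₂ : δ ≤ 2) (hM : M.IsHermitian) :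
    IsGreatest ((fun a => trace (a * M)) '' Sdelta d (δ / 2)) (pucci d δ M) := by
  simpa [pucci_eq hM, div_eq_mul_inv] using
    isGreatest_trace_mul_Sdelta (half_pos hδ₀) (by linarith) hM

lemma convexOn_pucci (hδ₀ : 0 < δ) (hδ₂ : δ ≤ 2) :
    ConvexOn ℝ (selfAdjoint.submodule ℝ (Matrix (Fin d) (Fin d) ℝ)) (pucci d δ) := by
  refine ⟨Submodule.convex _, fun A hA B hB s t hs ht _ => ?_⟩
  obtain ⟨⟨a, ha, hmax⟩, -⟩ :=
    isGreatest_pucci hδ₀ hδ₂ (add_mem (Submodule.smul_mem _ s hA) (Submodule.smul_mem _ t hB))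
  calc pucci d δ (s • A + t • B) = s * trace (a * A) + t * trace (a * B) := by
        simp [← hmax, mul_add]
    _ ≤ s • pucci d δ A + t • pucci d δ B :=
      add_le_add
        (mul_le_mul_of_nonneg_left ((isGreatest_pucci hδ₀ hδ₂ hA).2 ⟨a, ha, rfl⟩) hs)
        (mul_le_mul_of_nonneg_left ((isGreatest_pucci hδ₀ hδ₂ hB).2 ⟨a, ha, rfl⟩) ht)

lemma pucci_smul (hδ₀ : 0 < δ) (hδ₂ : δ ≤ 2) (hM : M.IsHermitian) {c : ℝ} (hc : 0 ≤ c) :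
    pucci d δ (c • M) = c * pucci d δ M := by
  have hcM : (c • M).IsHermitian := (selfAdjoint.submodule ℝ _).smul_mem c hM
  have := (monotone_mul_left_of_nonneg hc).map_isGreatest (isGreatest_pucci hδ₀ hδ₂ hM)
  refine (isGreatest_pucci hδ₀ hδ₂ hcM).unique ?_
  simpa [Set.image_image] using this

lemma fderiv_max_pucci_eq_of_le {K : ℝ} {F : Matrix (Fin d) (Fin d) ℝ → ℝ}
    {f' : Matrix (Fin d) (Fin d) ℝ →L[ℝ] ℝ} (hδ₀ : 0 < δ) (hδ₂ : δ ≤ 2) (hM : M.IsHermitian)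
    (hf' : HasFDerivWithinAt (fun A => max (F A) (pucci d δ A - K)) f' {A | A.IsHermitian} M)
    (hle : F M ≤ pucci d δ M - K) : f' M = pucci d δ M := by
  have hmax : HasDerivAt (fun s : ℝ => max (F (s • M)) (pucci d δ (s • M) - K)) (f' M) 1 :=
    hasDerivAt_comp_smul_of_mem_submodule (V := selfAdjoint.submodule ℝ _) hf' hM
  have hpucci : HasDerivAt (fun s : ℝ => pucci d δ (s • M) - K) (pucci d δ M) 1 := by
    have hlin : HasDerivAt (fun s : ℝ => s * pucci d δ M - K) (pucci d δ M) 1 := by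
      simpa using ((hasDerivAt_id (1 : ℝ)).mul_const (pucci d δ M)).sub_const K
    refine hlin.congr_of_eventuallyEq ?_
    filter_upwards [lt_mem_nhds zero_lt_one] with s hs
    rw [pucci_smul hδ₀ hδ₂ hM hs.le]
  exact eq_of_hasDerivAt_max_of_le hmax hpucci (by simpa using hle)

end Pucci

section UniformlyElliptic

open Matrix

variable {d : ℕ} {δ K : ℝ} {F : Matrix (Fin d) (Fin d) ℝ → ℝ} {M : Matrix (Fin d) (Fin d) ℝ}
  {f' : Matrix (Fin d) (Fin d) ℝ →L[ℝ] ℝ}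

/-- A uniformly elliptic function of the Hessian, with ellipticity constant `δ`: it is Lipschitz on
the symmetric matrices and, wherever it is differentiable along them, its derivative is
`w ↦ tr (a w)`, on symmetric `w`, for some `a ∈ 𝕊_δ`. -/
structure IsUniformlyElliptic (δ : ℝ) (F : Matrix (Fin d) (Fin d) ℝ → ℝ) : Prop where
  exists_lipschitzOnWith : ∃ C : ℝ≥0, LipschitzOnWith C F {A | A.IsHermitian}
  exists_fderiv_eq_trace : ∀ (M : Matrix (Fin d) (Fin d) ℝ)
      (f' : Matrix (Fin d) (Fin d) ℝ →L[ℝ] ℝ), M.IsHermitian →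
      HasFDerivWithinAt F f' {A | A.IsHermitian} M →
        ∃ a ∈ Sdelta d δ, ∀ w : Matrix (Fin d) (Fin d) ℝ, w.IsHermitian → f' w = trace (a * w)

lemma frobNorm_eq_norm (A : Matrix (Fin d) (Fin d) ℝ) : frobNorm d A = ‖A‖ := by
  simp [frobNorm, frobenius_norm_def, Real.sqrt_eq_rpow]

lemma exists_lipschitzOnWith_of_frobNorm
    (hF : ∃ C : ℝ, ∀ A B : Matrix (Fin d) (Fin d) ℝ, A.IsHermitian → B.IsHermitian →
      |F A - F B| ≤ C * frobNorm d (A - B)) :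
    ∃ C : ℝ≥0, LipschitzOnWith C F {A | A.IsHermitian} := by
  obtain ⟨C, hC⟩ := hF
  refine ⟨C.toNNReal, .of_dist_le_mul fun A hA B hB => ?_⟩
  calc dist (F A) (F B) ≤ C * ‖A - B‖ := by
        simpa only [Real.dist_eq, frobNorm_eq_norm] using hC A B hA hB
    _ ≤ C.toNNReal * dist A B := by
        rw [dist_eq_norm]
        exact mul_le_mul_of_nonneg_right (Real.le_coe_toNNReal C) (norm_nonneg _)

namespace IsUniformlyElliptic

lemma add_sub_le (hF : IsUniformlyElliptic δ F) {w : Matrix (Fin d) (Fin d) ℝ}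
    (hM : M.IsHermitian) (hw : w.IsHermitian) :
    F (M + w) - F M ≤ δ⁻¹ * posEigenvalueSum hw - δ * negEigenvalueSum hw := by
  obtain ⟨C, hC⟩ := hF.exists_lipschitzOnWith
  refine lipschitzOnWith_submodule_add_sub_le (V := selfAdjoint.submodule ℝ _) hC hw
    (fun B hB f' hf' => ?_) hM
  obtain ⟨a, ha, hf'_eq⟩ := hF.exists_fderiv_eq_trace B f' hB hf'
  exact hf'_eq w hw ▸ (trace_mul_mem_Icc ha hw).2

lemma sub_fderiv_mem_Icc_of_lt (hF : IsUniformlyElliptic δ F) (hδ₀ : 0 < δ) (hδ₂ : δ ≤ 2)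
    (hK : 0 ≤ K) (hM : M.IsHermitian)
    (hf' : HasFDerivWithinAt (fun A => max (F A) (pucci d δ A - K)) f' {A | A.IsHermitian} M)
    (hlt : pucci d δ M - K < F M) :
    F M - f' M ∈ Set.Icc (-K) ((2 + 2 / δ ^ 2) * (F 0 + K)) := by
  obtain ⟨C, hC⟩ := hF.exists_lipschitzOnWith
  obtain ⟨a, ha, hf'_eq⟩ := hF.exists_fderiv_eq_trace M f' hM <|
    hasFDerivWithinAt_of_max_of_lt hf' (hC.continuousOn M hM)
      (((convexOn_submodule_continuousOn (convexOn_pucci hδ₀ hδ₂)) M hM).sub_const K) hlt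
  obtain ⟨hlower, hupper⟩ := hf'_eq M hM ▸ trace_mul_mem_Icc ha hM
  have hgrowth : F M - F 0 ≤ δ⁻¹ * posEigenvalueSum hM - δ * negEigenvalueSum hM := by
    simpa using hF.add_sub_le isHermitian_zero hM
  rw [pucci_eq hM] at hlt
  have hpos := mul_nonneg (inv_nonneg.2 hδ₀.le) (posEigenvalueSum_nonneg hM)
  have hneg := mul_nonneg hδ₀.le (negEigenvalueSum_nonneg hM)
  have hδpos := mul_nonneg hδ₀.le (posEigenvalueSum_nonneg hM)
  have hsum : δ⁻¹ * posEigenvalueSum hM + δ / 2 * negEigenvalueSum hM ≤ F 0 + K := by linarith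
  have hneg_le : δ⁻¹ * negEigenvalueSum hM ≤ 2 / δ ^ 2 * (F 0 + K) :=
    calc δ⁻¹ * negEigenvalueSum hM = 2 / δ ^ 2 * (δ / 2 * negEigenvalueSum hM) := by field_simp
      _ ≤ 2 / δ ^ 2 * (F 0 + K) := by
        gcongr
        exact (le_add_of_nonneg_left hpos).trans hsum
  exact ⟨by linarith, by linarith⟩

theorem abs_max_sub_fderiv_le (hF : IsUniformlyElliptic δ F) (hδ₀ : 0 < δ) (hδ₂ : δ ≤ 2)
    (hK : 0 ≤ K) (hM : M.IsHermitian)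
    (hf' : HasFDerivWithinAt (fun A => max (F A) (pucci d δ A - K)) f' {A | A.IsHermitian} M) :
    |max (F M) (pucci d δ M - K) - f' M| ≤
      (2 + 2 / δ ^ 2) * (|max (F 0) (pucci d δ 0 - K)| + K) := by
  set R := |max (F 0) (pucci d δ 0 - K)| + K
  have hKR : K ≤ R := le_add_of_nonneg_left (abs_nonneg _)
  have hFR : F 0 + K ≤ R := add_le_add_left ((le_max_left _ _).trans (le_abs_self _)) K
  have hRN : R ≤ (2 + 2 / δ ^ 2) * R :=
    le_mul_of_one_le_left (hK.trans hKR) (by linarith [show 0 ≤ 2 / δ ^ 2 by positivity])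
  rcases le_or_gt (F M) (pucci d δ M - K) with hle | hlt
  · rw [max_eq_right hle, fderiv_max_pucci_eq_of_le hδ₀ hδ₂ hM hf' hle, sub_sub_cancel_left,
      abs_neg, abs_of_nonneg hK]
    exact hKR.trans hRN
  · rw [max_eq_left hlt.le]
    obtain ⟨hlower, hupper⟩ := hF.sub_fderiv_mem_Icc_of_lt hδ₀ hδ₂ hK hM hf' hlt
    refine abs_le.2 ⟨by linarith, hupper.trans ?_⟩
    gcongr

end IsUniformlyElliptic

end UniformlyElliptic

theorem HK_boundedly_inhomogeneous_general {d m : ℕ} {T X : Type*} {δ K₀ K HbarK : ℝ}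
    (hδ₀ : 0 < δ) (hδ₂ : δ ≤ 2) (hK₀ : 0 ≤ K₀) (hK : 0 ≤ K)
    {H : (Fin m → ℝ) → Matrix (Fin d) (Fin d) ℝ → T → X → ℝ}
    (hH : ∀ u' t x, IsUniformlyElliptic δ fun A => H u' A t x)
    (hHbarK : ∀ u' t x, |max (H u' 0 t x) (pucci d δ 0 - K)| - K₀ * eunorm u' ≤ HbarK)
    (u' : Fin m → ℝ) {M : Matrix (Fin d) (Fin d) ℝ} (hM : M.IsHermitian) (t : T) (x : X)
    {f' : Matrix (Fin d) (Fin d) ℝ →L[ℝ] ℝ}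
    (hf' : HasFDerivWithinAt (fun A => max (H u' A t x) (pucci d δ A - K)) f'
      {A | A.IsHermitian} M) :
    |max (H u' M t x) (pucci d δ M - K) - f' M| ≤
      (2 + 2 / δ ^ 2) * (K₀ + 1) * (HbarK + K + eunorm u') := by
  have hu' : 0 ≤ eunorm u' := Real.sqrt_nonneg _
  have hHbarK₀ : 0 ≤ HbarK :=
    (abs_nonneg _).trans (by simpa [eunorm] using hHbarK 0 t x)
  calc |max (H u' M t x) (pucci d δ M - K) - f' M|
      ≤ (2 + 2 / δ ^ 2) * (|max (H u' 0 t x) (pucci d δ 0 - K)| + K) :=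
        (hH u' t x).abs_max_sub_fderiv_le hδ₀ hδ₂ hK hM hf'
    _ ≤ (2 + 2 / δ ^ 2) * ((K₀ + 1) * (HbarK + K + eunorm u')) := by
        gcongr
        nlinarith [hHbarK u' t x]
    _ = (2 + 2 / δ ^ 2) * (K₀ + 1) * (HbarK + K + eunorm u') := (mul_assoc _ _ _).symm

/-- Inequality (9.30.01) of Lemma 3.2 of Krylov, "An ersatz existence theorem for
fully nonlinear parabolic equations without convexity assumptions": the function
`H_K = max(H, P₀ − K)` is boundedly inhomogeneous with respect to `u''`:
`|H_K(u,t,x) − tr(a u'')| ≤ N(K₀+1)(H̄_K + K + |u'|)` at points of differentiability,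
with `N` depending only on `d` and `δ`.  The finite supremum `H̄_K` is expressed
through an arbitrary upper bound `HbarK`. -/
theorem HK_boundedly_inhomogeneous (d : ℕ) (hd : 1 ≤ d) (δ : ℝ) (hδ : δ ∈ Set.Ioo (0:ℝ) 1) :
    ∃ N : ℝ,
      ∀ (K₀ K : ℝ), 0 ≤ K₀ → 0 < K →
      ∀ (H : (Fin (d + 1) → ℝ) → Matrix (Fin d) (Fin d) ℝ → ℝ → (Fin d → ℝ) → ℝ),
        -- Lipschitz continuity of `H` in `u''`
        (∃ C : ℝ, ∀ (u' : Fin (d + 1) → ℝ) (t : ℝ) (x : Fin d → ℝ)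
            (y y' : Matrix (Fin d) (Fin d) ℝ), y.IsHermitian → y'.IsHermitian →
            |H u' y t x - H u' y' t x| ≤ C * frobNorm d (y - y')) →
        -- at points of differentiability in `u''` the derivative lies in `𝕊_δ`
        (∀ (u' : Fin (d + 1) → ℝ) (t : ℝ) (x : Fin d → ℝ)
            (M : Matrix (Fin d) (Fin d) ℝ) (f' : Matrix (Fin d) (Fin d) ℝ →L[ℝ] ℝ),
            M.IsHermitian →
            HasFDerivWithinAt (fun y => H u' y t x) f' {A | A.IsHermitian} M →
            ∃ a ∈ Sdelta d δ, ∀ w : Matrix (Fin d) (Fin d) ℝ, w.IsHermitian →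
              f' w = Matrix.trace (a * w)) →
      ∀ (Hbar : ℝ), 0 ≤ Hbar →
        (∀ (u' : Fin (d + 1) → ℝ) (t : ℝ) (x : Fin d → ℝ),
            |H u' 0 t x| ≤ K₀ * eunorm u' + Hbar) →
      ∀ (HbarK : ℝ),
        -- `H̄_K = sup (|H_K(u',0,t,x)| − K₀|u'|)` is finite, bounded by `HbarK`
        (∀ (u' : Fin (d + 1) → ℝ) (t : ℝ) (x : Fin d → ℝ),
            |max (H u' 0 t x) (pucci d δ 0 - K)| - K₀ * eunorm u' ≤ HbarK) →
      ∀ (u' : Fin (d + 1) → ℝ) (M : Matrix (Fin d) (Fin d) ℝ), M.IsHermitian →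
        ∀ (t : ℝ) (x : Fin d → ℝ) (f' : Matrix (Fin d) (Fin d) ℝ →L[ℝ] ℝ)
          (a : Matrix (Fin d) (Fin d) ℝ),
          HasFDerivWithinAt (fun y => max (H u' y t x) (pucci d δ y - K)) f'
            {A | A.IsHermitian} M →
          a.IsHermitian →
          (∀ w : Matrix (Fin d) (Fin d) ℝ, w.IsHermitian → f' w = Matrix.trace (a * w)) →
          |max (H u' M t x) (pucci d δ M - K) - Matrix.trace (a * M)| ≤
            N * (K₀ + 1) * (HbarK + K + eunorm u') := by
  refine ⟨2 + 2 / δ ^ 2, ?_⟩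
  intro K₀ K hK₀ hK H hLip hD _ _ _ HbarK hHbarK u' M hM t x f' a hf' _ hf'_eq
  have hH (u' : Fin (d + 1) → ℝ) (t : ℝ) (x : Fin d → ℝ) :
      IsUniformlyElliptic δ fun A => H u' A t x :=
    ⟨exists_lipschitzOnWith_of_frobNorm (hLip.imp fun _ hC => hC u' t x), hD u' t x⟩
  exact hf'_eq M hM ▸ HK_boundedly_inhomogeneous_general hδ.1 (hδ.2.le.trans one_le_two)
    hK₀ hK.le hH hHbarK u' hM t x hf'
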